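/- Let ω̄ be a T-periodic solution of the ODE ω' = f(t,ω) and suppose μ̄ := −(1/T)∫₀ᵀ f_u(t,ω̄(t)) dt < 0. Let φ̄(t) = exp( ∫₀ᵗ f_u(s,ω̄(s)) ds − (t/T)∫₀ᵀ f_u(s,ω̄(s)) ds ). Then there exists ε₀ > 0 such that for every integer n ≥ 1 the T-periodic function φ_n(t) := ω̄(t) − (ε₀/n)·φ̄(t) satisfies φ_n'(t) > f(t, φ_n(t)) for all t ∈ ℝ (i.e., φ_n is a strict T-periodic supersolution of the ODE); moreover φ_n(t) < ω̄(t) for all t and n, and φ_n → ω̄ uniformly on ℝ as n → ∞. -/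

import Mathlib

open Real Filter Topology Set

noncomputable section

/-!
Linearizing at `ω̄`, the defect `v' - f(t, v)` of `v = ω̄ - εφ̄` is `-εμ̄φ̄ + o(ε)`, which is
positive for small `ε > 0` because `μ̄ < 0`. The mean value theorem reduces this to
`f_u(t, ω̄) + μ̄ < f_u(t, ξ)` for `ξ` between `ω̄ - εφ̄` and `ω̄`, and periodicity makes the
required smallness of `ε` uniform in `t`.
-/

section PeriodicEigenproblem

variable {T : ℝ} {g : ℝ → ℝ}

/-- The principal eigenvalue `μ` of the `T`-periodic problem `φ' - g φ = μ φ`. -/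
def periodicEigenvalue (T : ℝ) (g : ℝ → ℝ) : ℝ :=
  -(1 / T) * ∫ t in (0 : ℝ)..T, g t

/-- The positive eigenfunction `φ` of the `T`-periodic problem `φ' - g φ = μ φ`, normalized by
`φ 0 = 1`. -/
def periodicEigenfunction (T : ℝ) (g : ℝ → ℝ) (t : ℝ) : ℝ :=
  exp ((∫ s in (0 : ℝ)..t, g s) - (t / T) * ∫ s in (0 : ℝ)..T, g s)

lemma periodicEigenfunction_pos (T : ℝ) (g : ℝ → ℝ) (t : ℝ) : 0 < periodicEigenfunction T g t :=
  exp_pos _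

lemma hasDerivAt_periodicEigenfunction (hg : Continuous g) (T t : ℝ) :
    HasDerivAt (periodicEigenfunction T g)
      ((g t + periodicEigenvalue T g) * periodicEigenfunction T g t) t := by
  have hasDerivAt_primitive : HasDerivAt (fun t => ∫ s in (0 : ℝ)..t, g s) (g t) t :=
    (hg.integral_hasStrictDerivAt 0 t).hasDerivAt
  have hasDerivAt_mean : HasDerivAt (fun t => (t / T) * ∫ s in (0 : ℝ)..T, g s)
      (1 / T * ∫ s in (0 : ℝ)..T, g s) t :=
    ((hasDerivAt_id t).div_const T).mul_const _
  refine (hasDerivAt_primitive.fun_sub hasDerivAt_mean).exp.congr_deriv ?_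
  rw [periodicEigenvalue, periodicEigenfunction]
  ring

lemma continuous_periodicEigenfunction (hg : Continuous g) (T : ℝ) :
    Continuous (periodicEigenfunction T g) :=
  continuous_iff_continuousAt.2 fun t => (hasDerivAt_periodicEigenfunction hg T t).continuousAt

lemma periodic_periodicEigenfunction (hT : T ≠ 0) (hg : Continuous g)
    (hgper : Function.Periodic g T) : Function.Periodic (periodicEigenfunction T g) T := fun t => by
  rw [periodicEigenfunction, periodicEigenfunction,
    hgper.intervalIntegral_add_eq_add 0 t fun a b => hg.intervalIntegrable a b, zero_add,
    add_div, div_self hT]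
  ring_nf

end PeriodicEigenproblem

section Uniformity

lemma tendstoUniformly_sub_smul {ι X 𝕜 E : Type*} [NormedField 𝕜] [SeminormedAddCommGroup E]
    [NormedSpace 𝕜 E] {l : Filter ι} {c : ι → 𝕜} {w φ : X → E} (hc : Tendsto c l (𝓝 0))
    (hφ : Bornology.IsBounded (range φ)) :
    TendstoUniformly (fun i x => w x - c i • φ x) w l := by
  obtain ⟨C, hC⟩ := hφ.exists_norm_le
  have norm_mul_tendsto : Tendsto (fun i => ‖c i‖ * C) l (𝓝 0) := by
    simpa only [norm_zero, zero_mul] using hc.norm.mul_const C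
  refine Metric.tendstoUniformly_iff.2 fun ε hε => ?_
  filter_upwards [norm_mul_tendsto.eventually_lt_const hε] with i hi x
  calc dist (w x) (w x - c i • φ x) = ‖c i‖ * ‖φ x‖ := by rw [dist_self_sub_right, norm_smul]
    _ ≤ ‖c i‖ * C := by gcongr; exact hC _ (mem_range_self x)
    _ < ε := hi

lemma eventually_forall_mem_of_periodic {Y Z : Type*} [TopologicalSpace Y] [TopologicalSpace Z]
    {G : ℝ → Y → Z} {T : ℝ} {U : Set Z} {y₀ : Y} (hT : T ≠ 0)
    (hG : Continuous (Function.uncurry G)) (hGper : Function.Periodic G T) (hU : IsOpen U)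
    (hy₀ : ∀ t, G t y₀ ∈ U) : ∀ᶠ y in 𝓝 y₀, ∀ t, G t y ∈ U := by
  have on_period : ∀ᶠ y in 𝓝 y₀, ∀ t ∈ uIcc 0 (0 + T), G t y ∈ U :=
    isCompact_uIcc.eventually_forall_of_forall_eventually fun t _ =>
      (hG.comp continuous_swap).continuousAt.eventually_mem (hU.mem_nhds (hy₀ t))
  filter_upwards [on_period] with y hy t
  obtain ⟨s, hs, hst⟩ : G t ∈ G '' uIcc 0 (0 + T) := hGper.image_uIcc hT 0 ▸ mem_range_self t
  exact hst ▸ hy s hs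

lemma eventually_forall_add_lt_apply_sub {F : ℝ → ℝ → ℝ} {w : ℝ → ℝ} {T μ : ℝ} (hT : T ≠ 0)
    (hF : Continuous (Function.uncurry F)) (hFper : Function.Periodic F T) (hw : Continuous w)
    (hwper : Function.Periodic w T) (hμ : μ < 0) :
    ∀ᶠ s in 𝓝 0, ∀ t, F t (w t) + μ < F t (w t - s) := by
  have hcont : Continuous (Function.uncurry fun t s => F t (w t - s) - F t (w t)) :=
    (hF.comp (by fun_prop : Continuous fun p : ℝ × ℝ => (p.1, w p.1 - p.2))).sub
      (hF.comp (by fun_prop : Continuous fun p : ℝ × ℝ => (p.1, w p.1)))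
  have hper : Function.Periodic (fun t s => F t (w t - s) - F t (w t)) T := fun t => by
    simp only [hFper t, hwper t]
  have at_zero (t : ℝ) : F t (w t - 0) - F t (w t) ∈ Ioi μ := by
    simpa only [sub_zero, sub_self, mem_Ioi] using hμ
  simpa only [mem_Ioi, lt_sub_iff_add_lt'] using
    eventually_forall_mem_of_periodic hT hcont hper isOpen_Ioi at_zero

end Uniformity

section PartialDerivative

lemma continuous_uncurry_of_hasDerivAt_snd {𝕜 E F : Type*} [NontriviallyNormedField 𝕜]
    [NormedAddCommGroup E] [NormedSpace 𝕜 E] [NormedAddCommGroup F] [NormedSpace 𝕜 F]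
    {f f' : E → 𝕜 → F} (hf : ContDiff 𝕜 1 (Function.uncurry f))
    (hf' : ∀ x u, HasDerivAt (f x) (f' x u) u) : Continuous (Function.uncurry f') := by
  have hf_snd : ContDiff 𝕜 1 (Function.uncurry fun (p : E × 𝕜) u => f p.1 u) :=
    hf.comp (contDiff_fst.fst.prodMk contDiff_snd)
  have partial_eq : Function.uncurry f' = fun p : E × 𝕜 => fderiv 𝕜 (f p.1) p.2 1 :=
    funext fun p => (hf' p.1 p.2).deriv.symm
  rw [partial_eq]
  exact ((hf_snd.fderiv contDiff_snd (zero_add 1).le).continuous (n := 0)).clm_apply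
    continuous_const

lemma periodic_of_hasDerivAt_snd {α 𝕜 F : Type*} [Add α] [NontriviallyNormedField 𝕜]
    [NormedAddCommGroup F] [NormedSpace 𝕜 F] {f f' : α → 𝕜 → F} {T : α}
    (hfper : Function.Periodic f T) (hf' : ∀ x u, HasDerivAt (f x) (f' x u) u) :
    Function.Periodic f' T := by
  obtain rfl : f' = deriv ∘ f := funext₂ fun x u => (hf' x u).deriv.symm
  exact hfper.comp deriv

end PartialDerivative

section Supersolution

variable {f fu : ℝ → ℝ → ℝ} {w φ : ℝ → ℝ} {T μ : ℝ}

/-- `v` is a strict supersolution of the scalar equation `u' = f(t, u)` on the whole line.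
Differentiability is part of the notion, so that `deriv v` is a genuine derivative. -/
def IsStrictSupersolution (f : ℝ → ℝ → ℝ) (v : ℝ → ℝ) : Prop :=
  Differentiable ℝ v ∧ ∀ t, f t (v t) < deriv v t

lemma isStrictSupersolution_sub (hfu : ∀ t u, HasDerivAt (f t) (fu t u) u)
    (hw : ∀ t, HasDerivAt w (f t (w t)) t) (hφpos : ∀ t, 0 < φ t)
    (hφ : ∀ t, HasDerivAt φ ((fu t (w t) + μ) * φ t) t)
    (hgap : ∀ t, ∀ u ∈ Ioo (w t - φ t) (w t), fu t (w t) + μ < fu t u) :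
    IsStrictSupersolution f fun t => w t - φ t := by
  have hderiv (t : ℝ) := (hw t).fun_sub (hφ t)
  refine ⟨fun t => (hderiv t).differentiableAt, fun t => ?_⟩
  have hlt : w t - φ t < w t := sub_lt_self _ (hφpos t)
  have mean_value : (fu t (w t) + μ) * (w t - (w t - φ t)) < f t (w t) - f t (w t - φ t) :=
    (convex_Icc _ _).mul_sub_lt_image_sub_of_lt_deriv
      (fun u _ => (hfu t u).continuousAt.continuousWithinAt)
      (fun u _ => (hfu t u).differentiableAt.differentiableWithinAt)
      (fun u hu => (hfu t u).deriv ▸ hgap t u (interior_Icc (α := ℝ) ▸ hu))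
      _ (left_mem_Icc.2 hlt.le) _ (right_mem_Icc.2 hlt.le) hlt
  rw [sub_sub_cancel] at mean_value
  rw [(hderiv t).deriv]
  exact lt_sub_comm.1 mean_value

lemma eventually_isStrictSupersolution_sub_mul (hT : T ≠ 0)
    (hfu : ∀ t u, HasDerivAt (f t) (fu t u) u) (hfu_cont : Continuous (Function.uncurry fu))
    (hfu_per : Function.Periodic fu T) (hw : ∀ t, HasDerivAt w (f t (w t)) t)
    (hw_per : Function.Periodic w T) (hμ : μ < 0) (hφpos : ∀ t, 0 < φ t)
    (hφ_bdd : Bornology.IsBounded (range φ))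
    (hφ : ∀ t, HasDerivAt φ ((fu t (w t) + μ) * φ t) t) :
    ∀ᶠ ε in 𝓝[>] 0, IsStrictSupersolution f fun t => w t - ε * φ t := by
  have hw_cont : Continuous w := continuous_iff_continuousAt.2 fun t => (hw t).continuousAt
  obtain ⟨r, hr, hgap⟩ := Metric.eventually_nhds_iff.1
    (eventually_forall_add_lt_apply_sub hT hfu_cont hfu_per hw_cont hw_per hμ)
  have mul_lt : ∀ᶠ ε in 𝓝[>] (0 : ℝ), ∀ t, ε * φ t < r := by
    have sub_tendsto : TendstoUniformly (fun (ε : ℝ) t => w t - ε • φ t) w (𝓝 0) :=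
      tendstoUniformly_sub_smul tendsto_id hφ_bdd
    filter_upwards [nhdsWithin_le_nhds (Metric.tendstoUniformly_iff.1 sub_tendsto r hr)] with ε hε t
    have norm_lt : ‖ε * φ t‖ < r := by simpa only [dist_self_sub_right, smul_eq_mul] using hε t
    exact (le_norm_self _).trans_lt norm_lt
  filter_upwards [mul_lt, self_mem_nhdsWithin] with ε hεr hε
  refine isStrictSupersolution_sub hfu hw (fun t => mul_pos hε (hφpos t))
    (fun t => ((hφ t).const_mul ε).congr_deriv (mul_left_comm _ _ _)) fun t u hu => ?_
  have dist_lt : dist (w t - u) 0 < r := by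
    rw [dist_zero_right, norm_of_nonneg (sub_nonneg.2 hu.2.le)]
    linarith [hu.1, hεr t]
  simpa only [sub_sub_cancel] using hgap dist_lt t

end Supersolution

theorem strict_periodic_supersolutions_below_general
    {f fu : ℝ → ℝ → ℝ} {T μ : ℝ} {ωb φ : ℝ → ℝ} (hT : T ≠ 0)
    (hfper : ∀ t u : ℝ, f (t + T) u = f t u)
    (hfu : ∀ t u : ℝ, HasDerivAt (fun v => f t v) (fu t u) u)
    (hfu_cont : Continuous (Function.uncurry fu))
    (hωode : ∀ t : ℝ, HasDerivAt ωb (f t (ωb t)) t)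
    (hωper : ∀ t : ℝ, ωb (t + T) = ωb t)
    (hμ : μ = -(1 / T) * ∫ t in (0 : ℝ)..T, fu t (ωb t)) (hμneg : μ < 0)
    (hφ : ∀ t : ℝ, φ t = Real.exp ((∫ s in (0 : ℝ)..t, fu s (ωb s)) -
      (t / T) * ∫ s in (0 : ℝ)..T, fu s (ωb s))) :
    ∃ ε₀ > (0 : ℝ),
      (∀ n : ℕ, 1 ≤ n → ∀ t : ℝ,
        (ωb (t + T) - (ε₀ / n) * φ (t + T) = ωb t - (ε₀ / n) * φ t) ∧
        f t (ωb t - (ε₀ / n) * φ t) < deriv (fun s => ωb s - (ε₀ / n) * φ s) t ∧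
        ωb t - (ε₀ / n) * φ t < ωb t) ∧
      TendstoUniformly (fun (n : ℕ) (t : ℝ) => ωb t - (ε₀ / n) * φ t) ωb atTop := by
  obtain rfl : μ = periodicEigenvalue T fun t => fu t (ωb t) := hμ
  obtain rfl : φ = periodicEigenfunction T fun t => fu t (ωb t) := funext hφ
  set φ := periodicEigenfunction T fun t => fu t (ωb t)
  have hfu_per : Function.Periodic fu T :=
    periodic_of_hasDerivAt_snd (fun t => funext (hfper t)) hfu
  have hg : Continuous fun t => fu t (ωb t) := hfu_cont.comp
    (continuous_id.prodMk (continuous_iff_continuousAt.2 fun t => (hωode t).continuousAt))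
  have hφpos : ∀ t, 0 < φ t := periodicEigenfunction_pos T _
  have hφper : Function.Periodic φ T :=
    periodic_periodicEigenfunction hT hg fun t => by simp only [hfu_per t, hωper]
  have hφ_bdd : Bornology.IsBounded (range φ) :=
    hφper.isBounded_of_continuous hT (continuous_periodicEigenfunction hg T)
  obtain ⟨ε₀, hε₀, hsuper⟩ := mem_nhdsGT_iff_exists_Ioc_subset.1 <|
    eventually_isStrictSupersolution_sub_mul hT hfu hfu_cont hfu_per hωode hωper hμneg hφpos
      hφ_bdd (hasDerivAt_periodicEigenfunction hg T)
  refine ⟨ε₀, hε₀, fun n hn t => ?_, ?_⟩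
  · have hε : ε₀ / n ∈ Ioc 0 ε₀ :=
      ⟨div_pos hε₀ (by positivity), div_le_self hε₀.le (by exact_mod_cast hn)⟩
    exact ⟨by rw [hωper, hφper t], (hsuper hε).2 t, sub_lt_self _ (mul_pos hε.1 (hφpos t))⟩
  · exact tendstoUniformly_sub_smul (tendsto_const_div_atTop_nhds_zero_nat ε₀) hφ_bdd

/-- If the periodic eigenvalue `μ̄` of a `T`-periodic ODE solution `ω̄` is negative, then the
functions `φ_n = ω̄ − (ε₀/n)φ̄` are, for a suitable `ε₀ > 0`, strict `T`-periodic
supersolutions of the ODE lying below `ω̄` and converging uniformly to `ω̄`. -/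
theorem strict_periodic_supersolutions_below
    (f : ℝ → ℝ → ℝ) (T : ℝ) (hT : 0 < T)
    (hf : ContDiff ℝ 2 (Function.uncurry f))
    (hfper : ∀ t u : ℝ, f (t + T) u = f t u)
    (fu : ℝ → ℝ → ℝ)
    (hfu : ∀ t u : ℝ, HasDerivAt (fun v => f t v) (fu t u) u)
    (ωb : ℝ → ℝ)
    (hωode : ∀ t : ℝ, HasDerivAt ωb (f t (ωb t)) t)
    (hωper : ∀ t : ℝ, ωb (t + T) = ωb t)
    (μ : ℝ) (hμ : μ = -(1 / T) * ∫ t in (0:ℝ)..T, fu t (ωb t))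
    (hμneg : μ < 0)
    (φ : ℝ → ℝ)
    (hφ : ∀ t : ℝ, φ t = Real.exp ((∫ s in (0:ℝ)..t, fu s (ωb s)) -
      (t / T) * ∫ s in (0:ℝ)..T, fu s (ωb s))) :
    ∃ ε₀ > (0:ℝ),
      (∀ n : ℕ, 1 ≤ n → ∀ t : ℝ,
        (ωb (t + T) - (ε₀ / n) * φ (t + T) = ωb t - (ε₀ / n) * φ t) ∧
        f t (ωb t - (ε₀ / n) * φ t) < deriv (fun s => ωb s - (ε₀ / n) * φ s) t ∧
        ωb t - (ε₀ / n) * φ t < ωb t) ∧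
      TendstoUniformly (fun (n : ℕ) (t : ℝ) => ωb t - (ε₀ / n) * φ t) ωb atTop := by
  exact strict_periodic_supersolutions_below_general hT.ne' hfper hfu
    (continuous_uncurry_of_hasDerivAt_snd (hf.of_le one_le_two) hfu) hωode hωper hμ hμneg hφ

end
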